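/- arXiv:2011.05033 — 6 statements merged into one kernel-verified Lean document; each statement's English description precedes it below -/
import Mathlib

section
/- The feasible region of the Shor relaxation (S) is nonempty if and only if the feasible region of the convex relaxation (C) is nonempty, and the optimal values coincide: p* = v* (as infima in the extended reals). -/
/-!
The Shor and convex relaxations agree because, for diagonal data, both the objective and the
constraints of the Shor relaxation see a matrix `X` only through its diagonal
(`traceIP_of_isDiag`). Hence `(X, x) ↦ (x, diag X)` sends Shor-feasible points to feasible points
of the convex relaxation with the same objective value, since the diagonal of the positive
semidefinite matrix `X - x xᵀ` is nonnegative (`convFeas_of_shorFeas`). Conversely, `(x, z)` lifts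
to `X = x xᵀ + diag (z - x²)`, whose diagonal is `z` and for which `X - x xᵀ` is a nonnegative
diagonal matrix (`shorFeas_lift`). So the two relaxations attain exactly the same set of
objective values.
-/

/- Common definitions for diagonal QCQPs, the Shor relaxation, and the
convex relaxations, following "Exactness conditions for the Shor relaxation
of diagonal QCQPs". Optimal values are infima in the extended reals. -/

namespace DiagQCQP2011

open Matrix Finset

noncomputable section

/-- Trace inner product `Y • X` of two square matrices. -/
def traceIP {n : ℕ} (Y X : Matrix (Fin n) (Fin n) ℝ) : ℝ :=
  ∑ j, ∑ k, Y j k * X j k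

/-- Objective of the QCQP (P): `xᵀ D x + 2 cᵀ x`. -/
def qObj {n : ℕ} (D : Matrix (Fin n) (Fin n) ℝ) (c : Fin n → ℝ) (x : Fin n → ℝ) : ℝ :=
  (∑ j, ∑ k, x j * D j k * x k) + 2 * ∑ j, c j * x j

/-- Feasibility for the QCQP (P): `xᵀ Aⁱ x + 2 aᵢᵀ x ≤ bᵢ` for all `i`. -/
def qFeas {n m : ℕ} (A : Fin m → Matrix (Fin n) (Fin n) ℝ) (a : Fin m → Fin n → ℝ)
    (b : Fin m → ℝ) (x : Fin n → ℝ) : Prop :=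
  ∀ i, (∑ j, ∑ k, x j * A i j k * x k) + 2 * ∑ j, a i j * x j ≤ b i

/-- Optimal value `c*` of the QCQP (P), as an infimum in the extended reals. -/
def qVal {n m : ℕ} (D : Matrix (Fin n) (Fin n) ℝ) (A : Fin m → Matrix (Fin n) (Fin n) ℝ)
    (c : Fin n → ℝ) (a : Fin m → Fin n → ℝ) (b : Fin m → ℝ) : EReal :=
  sInf {v : EReal | ∃ x : Fin n → ℝ, qFeas A a b x ∧ v = ((qObj D c x : ℝ) : EReal)}

/-- Objective of the Shor relaxation (S): `D • X + 2 cᵀ x`. -/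
def shorObj {n : ℕ} (D : Matrix (Fin n) (Fin n) ℝ) (c : Fin n → ℝ)
    (X : Matrix (Fin n) (Fin n) ℝ) (x : Fin n → ℝ) : ℝ :=
  traceIP D X + 2 * ∑ j, c j * x j

/-- Feasibility for the Shor relaxation (S). -/
def shorFeas {n m : ℕ} (A : Fin m → Matrix (Fin n) (Fin n) ℝ) (a : Fin m → Fin n → ℝ)
    (b : Fin m → ℝ) (X : Matrix (Fin n) (Fin n) ℝ) (x : Fin n → ℝ) : Prop :=
  X.IsSymm ∧ (∀ i, traceIP (A i) X + 2 * ∑ j, a i j * x j ≤ b i) ∧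
    (X - vecMulVec x x).PosSemidef

/-- Optimal value `v*` of the Shor relaxation (S). -/
def shorVal {n m : ℕ} (D : Matrix (Fin n) (Fin n) ℝ) (A : Fin m → Matrix (Fin n) (Fin n) ℝ)
    (c : Fin n → ℝ) (a : Fin m → Fin n → ℝ) (b : Fin m → ℝ) : EReal :=
  sInf {v : EReal | ∃ (X : Matrix (Fin n) (Fin n) ℝ) (x : Fin n → ℝ),
    shorFeas A a b X x ∧ v = ((shorObj D c X x : ℝ) : EReal)}

/-- Strict feasibility (interior point) for the Shor relaxation (S). -/
def shorStrictFeas {n m : ℕ} (A : Fin m → Matrix (Fin n) (Fin n) ℝ) (a : Fin m → Fin n → ℝ)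
    (b : Fin m → ℝ) (X : Matrix (Fin n) (Fin n) ℝ) (x : Fin n → ℝ) : Prop :=
  X.IsSymm ∧ (∀ i, traceIP (A i) X + 2 * ∑ j, a i j * x j < b i) ∧
    (X - vecMulVec x x).PosDef

/-- Assumption 1: (P) is feasible, some nonnegative combination of the `Aⁱ` is
positive definite, and (S) has a strictly feasible (interior) point. -/
def Assumption1 {n m : ℕ} (A : Fin m → Matrix (Fin n) (Fin n) ℝ) (a : Fin m → Fin n → ℝ)
    (b : Fin m → ℝ) : Prop :=
  (∃ x : Fin n → ℝ, qFeas A a b x) ∧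
  (∃ y : Fin m → ℝ, (∀ i, 0 ≤ y i) ∧ (∑ i, y i • A i).PosDef) ∧
  (∃ (X : Matrix (Fin n) (Fin n) ℝ) (x : Fin n → ℝ), shorStrictFeas A a b X x)

/-- Objective of the convex relaxation (C). -/
def convObj {n : ℕ} (D : Matrix (Fin n) (Fin n) ℝ) (c : Fin n → ℝ)
    (x z : Fin n → ℝ) : ℝ :=
  (∑ j, D j j * z j) + 2 * ∑ j, c j * x j

/-- Feasibility for the convex relaxation (C). -/
def convFeas {n m : ℕ} (A : Fin m → Matrix (Fin n) (Fin n) ℝ) (a : Fin m → Fin n → ℝ)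
    (b : Fin m → ℝ) (x z : Fin n → ℝ) : Prop :=
  (∀ i, (∑ j, A i j j * z j) + 2 * ∑ j, a i j * x j ≤ b i) ∧ ∀ j, x j ^ 2 ≤ z j

/-- Optimal value `p*` of the convex relaxation (C). -/
def convVal {n m : ℕ} (D : Matrix (Fin n) (Fin n) ℝ) (A : Fin m → Matrix (Fin n) (Fin n) ℝ)
    (c : Fin n → ℝ) (a : Fin m → Fin n → ℝ) (b : Fin m → ℝ) : EReal :=
  sInf {v : EReal | ∃ x z : Fin n → ℝ,
    convFeas A a b x z ∧ v = ((convObj D c x z : ℝ) : EReal)}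

/-- KKT point of the convex relaxation (C). -/
def KKT {n m : ℕ} (D : Matrix (Fin n) (Fin n) ℝ) (A : Fin m → Matrix (Fin n) (Fin n) ℝ)
    (c : Fin n → ℝ) (a : Fin m → Fin n → ℝ) (b : Fin m → ℝ)
    (x z : Fin n → ℝ) (μ : Fin m → ℝ) (ν : Fin n → ℝ) : Prop :=
  (∀ i, 0 ≤ μ i) ∧ (∀ j, 0 ≤ ν j) ∧
  (∀ j, D j j + (∑ i, μ i * A i j j) - ν j = 0) ∧
  (∀ j, c j + (∑ i, μ i * a i j) + ν j * x j = 0) ∧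
  convFeas A a b x z ∧
  (∀ i, μ i * (b i - (∑ j, A i j j * z j) - 2 * ∑ j, a i j * x j) = 0) ∧
  (∀ j, ν j * (z j - x j ^ 2) = 0)

/-- The polyhedral set `S_k` of multipliers, whose emptiness (for all `k`)
is the exactness condition of Burer–Ye. -/
def Sk {n m : ℕ} (D : Matrix (Fin n) (Fin n) ℝ) (A : Fin m → Matrix (Fin n) (Fin n) ℝ)
    (c : Fin n → ℝ) (a : Fin m → Fin n → ℝ) (k : Fin n) : Set (Fin m → ℝ) :=
  {μ | (∀ i, 0 ≤ μ i) ∧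
       D k k + (∑ i, μ i * A i k k) = 0 ∧
       c k + (∑ i, μ i * a i k) = 0 ∧
       ∀ j, j ≠ k → 0 ≤ D j j + (∑ i, μ i * A i j j)}

/-- Partition hypothesis: `{N_h}` partitions `N`, within each class all
constraint matrices have a common diagonal value `ξ^{ih}`, and in each class the
minimal diagonal entry of `D` is attained at the unique index `j_h`. -/
def PartitionHyp {n m : ℕ} {H : Type*} (D : Matrix (Fin n) (Fin n) ℝ)
    (A : Fin m → Matrix (Fin n) (Fin n) ℝ) (Nh : H → Finset (Fin n))
    (ξ : Fin m → H → ℝ) (jh : H → Fin n) : Prop :=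
  (∀ j : Fin n, ∃! h : H, j ∈ Nh h) ∧
  (∀ i h, ∀ j ∈ Nh h, A i j j = ξ i h) ∧
  (∀ h, jh h ∈ Nh h) ∧
  (∀ h, ∀ j ∈ Nh h, j ≠ jh h → D (jh h) (jh h) < D j j)

/-- Objective of the second convex relaxation (C'). -/
def conv2Obj {n : ℕ} {H : Type*} [Fintype H] (D : Matrix (Fin n) (Fin n) ℝ)
    (c : Fin n → ℝ) (Nh : H → Finset (Fin n)) (jh : H → Fin n)
    (x : Fin n → ℝ) (w : H → ℝ) : ℝ :=
  (∑ h, D (jh h) (jh h) * w h) +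
    (∑ h, ∑ j ∈ Nh h, (D j j - D (jh h) (jh h)) * x j ^ 2) + 2 * ∑ j, c j * x j

/-- Feasibility for the second convex relaxation (C'). -/
def conv2Feas {n m : ℕ} {H : Type*} [Fintype H] (ξ : Fin m → H → ℝ)
    (a : Fin m → Fin n → ℝ) (b : Fin m → ℝ) (Nh : H → Finset (Fin n))
    (x : Fin n → ℝ) (w : H → ℝ) : Prop :=
  (∀ i, (∑ h, ξ i h * w h) + 2 * ∑ j, a i j * x j ≤ b i) ∧
  ∀ h, (∑ j ∈ Nh h, x j ^ 2) ≤ w h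

/-- Optimal value `q*` of the second convex relaxation (C'). -/
def conv2Val {n m : ℕ} {H : Type*} [Fintype H] (D : Matrix (Fin n) (Fin n) ℝ)
    (ξ : Fin m → H → ℝ) (c : Fin n → ℝ) (a : Fin m → Fin n → ℝ) (b : Fin m → ℝ)
    (Nh : H → Finset (Fin n)) (jh : H → Fin n) : EReal :=
  sInf {v : EReal | ∃ (x : Fin n → ℝ) (w : H → ℝ),
    conv2Feas ξ a b Nh x w ∧ v = ((conv2Obj D c Nh jh x w : ℝ) : EReal)}

/-- KKT point of the second convex relaxation (C'). -/
def KKT2 {n m : ℕ} {H : Type*} [Fintype H] (D : Matrix (Fin n) (Fin n) ℝ)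
    (ξ : Fin m → H → ℝ) (c : Fin n → ℝ) (a : Fin m → Fin n → ℝ) (b : Fin m → ℝ)
    (Nh : H → Finset (Fin n)) (jh : H → Fin n)
    (x : Fin n → ℝ) (w : H → ℝ) (μ : Fin m → ℝ) (γ : H → ℝ) : Prop :=
  (∀ i, 0 ≤ μ i) ∧ (∀ h, 0 ≤ γ h) ∧
  (∀ h, D (jh h) (jh h) + (∑ i, μ i * ξ i h) - γ h = 0) ∧
  (∀ h, ∀ j ∈ Nh h,
    (D j j - D (jh h) (jh h)) * x j + c j + (∑ i, μ i * a i j) + γ h * x j = 0) ∧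
  conv2Feas ξ a b Nh x w ∧
  (∀ i, μ i * (b i - (∑ h, ξ i h * w h) - 2 * ∑ j, a i j * x j) = 0) ∧
  (∀ h, γ h * (w h - ∑ j ∈ Nh h, x j ^ 2) = 0)

/-- Objective of the second convex relaxation (C') in the case `|H| = 1`
(with `j_1 = 0` scaled out; `d* = D 0 0`). -/
def conv1Obj {n : ℕ} [NeZero n] (D : Matrix (Fin n) (Fin n) ℝ) (c : Fin n → ℝ)
    (x : Fin n → ℝ) (w : ℝ) : ℝ :=
  D 0 0 * w + (∑ j, (D j j - D 0 0) * x j ^ 2) + 2 * ∑ j, c j * x j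

/-- Feasibility for the second convex relaxation (C') in the case `|H| = 1`. -/
def conv1Feas {n m : ℕ} (ξ : Fin m → ℝ) (a : Fin m → Fin n → ℝ) (b : Fin m → ℝ)
    (x : Fin n → ℝ) (w : ℝ) : Prop :=
  (∀ i, ξ i * w + 2 * ∑ j, a i j * x j ≤ b i) ∧ (∑ j, x j ^ 2) ≤ w

/-- Optimal value `q*` of the second convex relaxation (C') in the case `|H| = 1`. -/
def conv1Val {n m : ℕ} [NeZero n] (D : Matrix (Fin n) (Fin n) ℝ) (ξ : Fin m → ℝ)
    (c : Fin n → ℝ) (a : Fin m → Fin n → ℝ) (b : Fin m → ℝ) : EReal :=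
  sInf {v : EReal | ∃ (x : Fin n → ℝ) (w : ℝ),
    conv1Feas ξ a b x w ∧ v = ((conv1Obj D c x w : ℝ) : EReal)}

/-- The function `x_j(μ)` from the paper (meaningful for `j ≠ 0`, `|H| = 1`). -/
def xmu {n m : ℕ} [NeZero n] (D : Matrix (Fin n) (Fin n) ℝ) (c : Fin n → ℝ)
    (a : Fin m → Fin n → ℝ) (μ : Fin m → ℝ) (j : Fin n) : ℝ :=
  -(c j + ∑ i, μ i * a i j) / (D j j - D 0 0)

end


theorem traceIP_of_isDiag {n : ℕ} {Y : Matrix (Fin n) (Fin n) ℝ} (hY : Y.IsDiag)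
    (X : Matrix (Fin n) (Fin n) ℝ) : traceIP Y X = ∑ j, Y j j * X j j := by
  unfold traceIP
  refine Finset.sum_congr rfl fun j _ => ?_
  refine Finset.sum_eq_single j (fun k _ hk => ?_) (by simp)
  rw [hY hk.symm, zero_mul]

theorem shorObj_eq_convObj {n : ℕ} {D : Matrix (Fin n) (Fin n) ℝ} (hD : D.IsDiag)
    (c : Fin n → ℝ) (X : Matrix (Fin n) (Fin n) ℝ) (x : Fin n → ℝ) :
    shorObj D c X x = convObj D c x X.diag := by
  simp [shorObj, convObj, traceIP_of_isDiag hD]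

theorem convFeas_of_shorFeas {n m : ℕ} {A : Fin m → Matrix (Fin n) (Fin n) ℝ}
    (hA : ∀ i, (A i).IsDiag) {a : Fin m → Fin n → ℝ} {b : Fin m → ℝ}
    {X : Matrix (Fin n) (Fin n) ℝ} {x : Fin n → ℝ} (h : shorFeas A a b X x) :
    convFeas A a b x X.diag := by
  obtain ⟨-, hle, hpsd⟩ := h
  refine ⟨fun i => ?_, fun j => ?_⟩
  · simpa [traceIP_of_isDiag (hA i)] using hle i
  · have := hpsd.diag_nonneg (i := j)
    rw [Matrix.sub_apply, vecMulVec_apply, sub_nonneg] at this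
    rw [sq]
    exact this

/-- The Shor lift of a point `(x, z)` of the convex relaxation: the rank-one matrix `x xᵀ` with
its diagonal raised to `z`. -/
def shorLift {n : ℕ} (x z : Fin n → ℝ) : Matrix (Fin n) (Fin n) ℝ :=
  vecMulVec x x + diagonal fun j => z j - x j ^ 2

theorem diag_shorLift {n : ℕ} (x z : Fin n → ℝ) : (shorLift x z).diag = z := by
  ext j
  simp [shorLift, vecMulVec_apply, sq]

theorem shorFeas_lift {n m : ℕ} {A : Fin m → Matrix (Fin n) (Fin n) ℝ}
    (hA : ∀ i, (A i).IsDiag) {a : Fin m → Fin n → ℝ} {b : Fin m → ℝ}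
    {x z : Fin n → ℝ} (h : convFeas A a b x z) : shorFeas A a b (shorLift x z) x := by
  obtain ⟨hle, hsq⟩ := h
  refine ⟨?_, fun i => ?_, ?_⟩
  · simp [shorLift, Matrix.IsSymm, transpose_vecMulVec]
  · rw [traceIP_of_isDiag (hA i)]
    have hdiag (j : Fin n) : shorLift x z j j = z j := congrFun (diag_shorLift x z) j
    simpa only [hdiag] using hle i
  · rw [shorLift, add_sub_cancel_left]
    exact PosSemidef.diagonal fun j => sub_nonneg.2 (hsq j)

/-- the feasible region of the Shor relaxation (S) is nonempty iff
the feasible region of the convex relaxation (C) is nonempty, and the optimal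
values coincide: `p* = v*` (as infima in the extended reals). -/
theorem statement0 {n m : ℕ} (hn : 0 < n) (hm : 0 < m)
    (D : Matrix (Fin n) (Fin n) ℝ) (hD : D.IsDiag)
    (A : Fin m → Matrix (Fin n) (Fin n) ℝ) (hA : ∀ i, (A i).IsDiag)
    (c : Fin n → ℝ) (a : Fin m → Fin n → ℝ) (b : Fin m → ℝ) :
    ((∃ (X : Matrix (Fin n) (Fin n) ℝ) (x : Fin n → ℝ), shorFeas A a b X x) ↔
      (∃ x z : Fin n → ℝ, convFeas A a b x z)) ∧
    convVal D A c a b = shorVal D A c a b := by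
  refine ⟨⟨fun ⟨X, x, h⟩ => ⟨x, X.diag, convFeas_of_shorFeas hA h⟩,
    fun ⟨x, z, h⟩ => ⟨shorLift x z, x, shorFeas_lift hA h⟩⟩, ?_⟩
  unfold convVal shorVal
  congr 1
  ext v
  constructor
  · rintro ⟨x, z, h, rfl⟩
    refine ⟨shorLift x z, x, shorFeas_lift hA h, ?_⟩
    rw [shorObj_eq_convObj hD, diag_shorLift]
  · rintro ⟨X, x, h, rfl⟩
    exact ⟨x, X.diag, convFeas_of_shorFeas hA h, by rw [shorObj_eq_convObj hD]⟩

end DiagQCQP2011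
end

section
/- If (X̄, x̄) is a strictly feasible point of the Shor relaxation (S), i.e., A^i•X̄ + 2 a_i^T x̄ < b_i for all i ∈ M and X̄ − x̄ x̄^T is positive definite, then (x̄, z̄) with z̄ = diag(X̄) is a strictly feasible point of the convex relaxation (C), i.e., Σ_{j∈N} A^i_{jj} z̄_j + 2 Σ_{j∈N} a_{ij} x̄_j < b_i for all i ∈ M and x̄_j² < z̄_j for all j ∈ N. -/
/- Common definitions for diagonal QCQPs, the Shor relaxation, and the
convex relaxations, following "Exactness conditions for the Shor relaxation
of diagonal QCQPs". Optimal values are infima in the extended reals. -/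

namespace DiagQCQP2011

open Matrix Finset

/-- a strictly feasible point `(X̄, x̄)` of the Shor relaxation (S)
yields the strictly feasible point `(x̄, diag(X̄))` of the convex relaxation (C). -/
theorem statement3 {n m : ℕ} (hn : 0 < n) (hm : 0 < m)
    (D : Matrix (Fin n) (Fin n) ℝ) (hD : D.IsDiag)
    (A : Fin m → Matrix (Fin n) (Fin n) ℝ) (hA : ∀ i, (A i).IsDiag)
    (c : Fin n → ℝ) (a : Fin m → Fin n → ℝ) (b : Fin m → ℝ)
    (X : Matrix (Fin n) (Fin n) ℝ) (x : Fin n → ℝ)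
    (hstrict : shorStrictFeas A a b X x)
    (z : Fin n → ℝ) (hz : z = fun j => X j j) :
    (∀ i, (∑ j, A i j j * z j) + 2 * ∑ j, a i j * x j < b i) ∧
      ∀ j, x j ^ 2 < z j := by
  subst hz
  obtain ⟨-, hlin, hpd⟩ := hstrict
  refine ⟨fun i => ?_, fun j => ?_⟩
  · have hdiag : traceIP (A i) X = ∑ j, A i j j * X j j := by
      refine Finset.sum_congr rfl fun j _ => ?_
      refine Finset.sum_eq_single j (fun k _ hk => ?_) (by simp)
      rw [hA i hk.symm, zero_mul]
    simpa only [hdiag] using hlin i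
  -- The diagonal entries of the positive definite matrix `X - x xᵀ` are `X j j - x j ^ 2`.
  · have h : 0 < X j j - x j * x j := hpd.diag_pos (i := j)
    rw [sq]
    exact sub_pos.mp h

end DiagQCQP2011
end

section
/- Under Assumption 1, if the polyhedral set S_k is empty for every k ∈ N, then the convex relaxation (C) and the Shor relaxation (S) are exact, i.e., p* = v* = c*. -/
/-!
The relaxations satisfy `p* ≤ v* ≤ c*`, since `z = diag X` sends Shor-feasible points to points of
(C), and `X = x xᵀ` lifts feasible points of (P). For `c* ≤ p*`, the feasible set of (C) is
compact because a nonnegative combination of the `Aⁱ` is positive definite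
(`isCompact_convFeas`), so (C) has an optimal `(x, z)`. Slater's condition gives multipliers
`μ ≥ 0` for which the Lagrangian `∑ (ν_j z_j + 2 γ_j x_j) - ∑ μ_i b_i`, with
`ν_j = D_jj + ∑ μ_i Aⁱ_jj` and `γ_j = c_j + ∑ μ_i a_ij`, is at least `p*` on `{x_j² ≤ z_j}`
(`exists_multiplier`). Boundedness below forces `ν ≥ 0`, and `γ_k = 0` whenever `ν_k = 0`; the
latter would put `μ` in `S_k`, so every `ν_k` is positive. Hence `z_j = x_j²` at the optimum
(`optimal_tight`), and `x` is feasible for (P) with objective value `p*`.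
-/

/- Common definitions for diagonal QCQPs, the Shor relaxation, and the
convex relaxations, following "Exactness conditions for the Shor relaxation
of diagonal QCQPs". Optimal values are infima in the extended reals. -/

namespace DiagQCQP2011

open Matrix Finset

/-! ### Convex duality -/

section Multiplier

/-- Lagrange multipliers under Slater's condition. The epigraph-type set of all `(u, t)` that lie
strictly above some `(g w, f w)` with `w ∈ K` is open and convex and misses `(0, p)`; a separating
functional has nonnegative coefficients, and Slater's point makes its last coefficient positive. -/
theorem exists_multiplier {W : Type*} [AddCommGroup W] [Module ℝ W] {m : ℕ} {K : Set W}
    {f : W → ℝ} {g : Fin m → W → ℝ} (hf : ConvexOn ℝ K f) (hg : ∀ i, ConvexOn ℝ K (g i))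
    {p : ℝ} (hp : ∀ w ∈ K, (∀ i, g i w ≤ 0) → p ≤ f w)
    (hs : ∃ w ∈ K, ∀ i, g i w < 0) :
    ∃ μ : Fin m → ℝ, (∀ i, 0 ≤ μ i) ∧ ∀ w ∈ K, p ≤ f w + ∑ i, μ i * g i w := by
  set V : Set ((Fin m → ℝ) × ℝ) :=
    ⋃ w ∈ K, (Set.univ.pi fun i => Set.Ioi (g i w)) ×ˢ Set.Ioi (f w) with hV
  have memV : ∀ u t, (u, t) ∈ V ↔ ∃ w ∈ K, (∀ i, g i w < u i) ∧ f w < t := by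
    intro u t
    simp only [hV, Set.mem_iUnion, Set.mem_prod, Set.mem_univ_pi, Set.mem_Ioi, exists_prop]
  have hVo : IsOpen V := isOpen_biUnion fun w _ =>
    (isOpen_set_pi Set.finite_univ fun i _ => isOpen_Ioi).prod isOpen_Ioi
  have hVc : Convex ℝ V := by
    rintro ⟨u, t⟩ h1 ⟨u', t'⟩ h2 α β hα hβ hαβ
    obtain ⟨w, hw, hgw, hfw⟩ := (memV _ _).1 h1
    obtain ⟨w', hw', hgw', hfw'⟩ := (memV _ _).1 h2
    have key : ∀ q r s v : ℝ, q < r → s < v → α * q + β * s < α * r + β * v := by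
      intro q r s v h h'
      rcases hα.eq_or_lt with h0 | h0
      · have : β = 1 := by linarith
        subst this; rw [← h0]; linarith
      · have := mul_lt_mul_of_pos_left h h0
        have := mul_le_mul_of_nonneg_left h'.le hβ
        linarith
    refine (memV _ _).2 ⟨α • w + β • w', hf.1 hw hw' hα hβ hαβ, fun i => ?_, ?_⟩
    · exact ((hg i).2 hw hw' hα hβ hαβ).trans_lt (key _ _ _ _ (hgw i) (hgw' i))
    · exact (hf.2 hw hw' hα hβ hαβ).trans_lt (key _ _ _ _ hfw hfw')
  have h0 : ((0 : Fin m → ℝ), p) ∉ V := by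
    intro h
    obtain ⟨w, hw, hgw, hfw⟩ := (memV _ _).1 h
    exact absurd (hp w hw fun i => (hgw i).le) (not_le.2 hfw)
  obtain ⟨φ, hφ⟩ := geometric_hahn_banach_point_open hVc hVo h0
  set l : Fin m → ℝ := fun i => φ (Pi.single i 1, 0) with hl
  set τ : ℝ := φ (0, 1) with hτ
  have hφe : ∀ u t, φ (u, t) = ∑ i, u i * l i + t * τ := by
    intro u t
    have : (u, t) = ∑ i, u i • ((Pi.single i 1, 0) : (Fin m → ℝ) × ℝ) + t • (0, 1) := by
      ext j
      · simp [Prod.fst_sum, Finset.sum_apply, Pi.single_apply]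
      · simp [Prod.snd_sum]
    rw [this, map_add, map_sum, map_smul]
    simp only [map_smul, smul_eq_mul, hl, hτ]
  have hsep : ∀ w ∈ K, ∀ (u : Fin m → ℝ) (t : ℝ), (∀ i, g i w < u i) → f w < t →
      p * τ < ∑ i, u i * l i + t * τ := by
    intro w hw u t h1 h2
    have := hφ (u, t) ((memV _ _).2 ⟨w, hw, h1, h2⟩)
    rw [hφe, hφe] at this
    simpa using this
  -- A linear function bounded below on a ray has nonnegative slope there.
  have ray : ∀ q r s : ℝ, (∀ T : ℝ, 0 ≤ T → q < r + T * s) → 0 ≤ s := by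
    intro q r s h
    by_contra! hs
    have hT := h (|q - r| / (-s)) (by have : 0 < -s := by linarith
                                      positivity)
    have : |q - r| / (-s) * s = -|q - r| := by
      rw [div_neg, neg_mul, div_mul_cancel₀ _ hs.ne]
    rw [this] at hT
    have := neg_abs_le (q - r)
    linarith
  obtain ⟨w₀, hw₀, hgw₀⟩ := hs
  have hl0 : ∀ i, 0 ≤ l i := by
    intro i
    refine ray (p * τ) (∑ k, (g k w₀ + 1) * l k + (f w₀ + 1) * τ) _ fun T hT => ?_
    have := hsep w₀ hw₀ (fun k => g k w₀ + 1 + T * Pi.single (M := fun _ => ℝ) i 1 k) (f w₀ + 1)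
      (fun k => by
        have : 0 ≤ T * Pi.single (M := fun _ => ℝ) i 1 k := by
          by_cases h : k = i
          · subst h; simpa using hT
          · simp [h]
        linarith) (by linarith)
    simp only [add_mul _ (T * _), Finset.sum_add_distrib] at this
    simp [Pi.single_apply] at this
    linarith
  have hτ0 : 0 ≤ τ := by
    refine ray (p * τ) (∑ k, (g k w₀ + 1) * l k + (f w₀ + 1) * τ) _ fun T hT => ?_
    have := hsep w₀ hw₀ (fun k => g k w₀ + 1) (f w₀ + 1 + T)
      (fun k => by linarith) (by linarith)
    linarith
  have hτp : 0 < τ := by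
    refine hτ0.lt_of_ne fun h => ?_
    have := hsep w₀ hw₀ 0 (f w₀ + 1) hgw₀ (by linarith)
    rw [← h] at this
    simp at this
  refine ⟨fun i => l i / τ, fun i => div_nonneg (hl0 i) hτ0, fun w hw => ?_⟩
  have hlim : p * τ ≤ ∑ i, g i w * l i + f w * τ := by
    -- Let the strict slack `ε` above `(g w, f w)` tend to zero.
    have hle : ∀ ε : ℝ, 0 < ε →
        p * τ ≤ (∑ i, g i w * l i + f w * τ) + ε * (∑ i, l i + τ) := by
      intro ε hε
      have := hsep w hw (fun i => g i w + ε) (f w + ε) (fun i => by linarith) (by linarith)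
      simp only [add_mul, Finset.sum_add_distrib, ← Finset.mul_sum] at this
      linarith
    have hsum : 0 < ∑ i, l i + τ := add_pos_of_nonneg_of_pos (Finset.sum_nonneg fun i _ => hl0 i) hτp
    refine le_of_forall_pos_le_add fun ε hε => ?_
    have := hle (ε / (∑ i, l i + τ)) (by positivity)
    rwa [div_mul_cancel₀ _ hsum.ne'] at this
  have hrw : f w + ∑ i, l i / τ * g i w = (∑ i, g i w * l i + f w * τ) / τ := by
    rw [add_div, Finset.sum_div, mul_div_cancel_right₀ _ hτp.ne', add_comm]
    congr 1
    exact Finset.sum_congr rfl fun i _ => by ring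
  rw [hrw, le_div_iff₀ hτp]
  exact hlim

end Multiplier

section Diagonal

/-! ### Diagonal data and the set of pairs with squares below -/

variable {n m : ℕ}

theorem diag_quad {D : Matrix (Fin n) (Fin n) ℝ} (hD : D.IsDiag) (x : Fin n → ℝ) :
    ∑ j, ∑ k, x j * D j k * x k = ∑ j, D j j * x j ^ 2 := by
  refine Finset.sum_congr rfl fun j _ => ?_
  rw [Finset.sum_eq_single j]
  · ring
  · intro k _ hk
    rw [hD hk.symm]; ring
  · simp

theorem diag_trace {D : Matrix (Fin n) (Fin n) ℝ} (hD : D.IsDiag)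
    (X : Matrix (Fin n) (Fin n) ℝ) : traceIP D X = ∑ j, D j j * X j j := by
  refine Finset.sum_congr rfl fun j _ => ?_
  rw [Finset.sum_eq_single j]
  · intro k _ hk
    rw [hD hk.symm]; ring
  · simp

/-- The set of pairs `(x, z)` with `x_j² ≤ z_j` for all `j`. -/
def sqEpi (n : ℕ) : Set ((Fin n → ℝ) × (Fin n → ℝ)) := {w | ∀ j, w.1 j ^ 2 ≤ w.2 j}

theorem convex_sqEpi : Convex ℝ (sqEpi n) := by
  rintro ⟨x, z⟩ h ⟨x', z'⟩ h' α β hα hβ hαβ j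
  have h1 := mul_le_mul_of_nonneg_left (h j) hα
  have h2 := mul_le_mul_of_nonneg_left (h' j) hβ
  have h3 := (even_two.convexOn_pow (𝕜 := ℝ)).2 (Set.mem_univ (x j)) (Set.mem_univ (x' j)) hα hβ hαβ
  simp only [smul_eq_mul, Prod.fst_add, Prod.snd_add, Prod.smul_fst, Prod.smul_snd, Pi.add_apply,
    Pi.smul_apply] at *
  linarith

theorem convexOn_affine (d e : Fin n → ℝ) (β : ℝ) :
    ConvexOn ℝ (sqEpi n) fun w => ∑ j, d j * w.2 j + 2 * ∑ j, e j * w.1 j - β := by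
  refine ⟨convex_sqEpi, ?_⟩
  rintro ⟨x, z⟩ - ⟨x', z'⟩ - s t - - hst
  apply le_of_eq
  simp only [smul_eq_mul, Prod.fst_add, Prod.snd_add, Prod.smul_fst, Prod.smul_snd, Pi.add_apply,
    Pi.smul_apply, mul_add, Finset.sum_add_distrib, mul_left_comm _ s, mul_left_comm _ t,
    ← Finset.mul_sum]
  linear_combination β * hst

/-- A weighted sum of the constraints of (C), regrouped by coordinate. It is applied both to the
compactness weights and to the Lagrange multipliers. -/
theorem weighted_constraint (A : Fin m → Matrix (Fin n) (Fin n) ℝ) (a : Fin m → Fin n → ℝ)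
    (b y : Fin m → ℝ) (x z : Fin n → ℝ) :
    ∑ i, y i * (∑ j, A i j j * z j + 2 * ∑ j, a i j * x j - b i) =
      ∑ j, ((∑ i, y i * A i j j) * z j + 2 * (∑ i, y i * a i j) * x j) - ∑ i, y i * b i := by
  simp only [mul_sub, mul_add, Finset.sum_sub_distrib, Finset.sum_add_distrib, Finset.mul_sum,
    Finset.sum_mul]
  rw [Finset.sum_comm, Finset.sum_comm (f := fun i j => y i * (2 * (a i j * x j)))]
  congr 2
  · exact Finset.sum_congr rfl fun i _ => Finset.sum_congr rfl fun j _ => by ring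
  · exact Finset.sum_congr rfl fun i _ => Finset.sum_congr rfl fun j _ => by ring

/-! ### Compactness of the feasible set of (C) -/

/-- The feasible set of (C) is compact: weighting the constraints by `ȳ` bounds a separable
expression `∑ (α_j z_j + 2 β_j x_j)` with all `α_j > 0`, which is coercive on `x_j² ≤ z_j`. -/
theorem isCompact_convFeas (A : Fin m → Matrix (Fin n) (Fin n) ℝ) (a : Fin m → Fin n → ℝ)
    (b : Fin m → ℝ) {y : Fin m → ℝ} (hy : ∀ i, 0 ≤ y i) (hpd : (∑ i, y i • A i).PosDef) :
    IsCompact {w : (Fin n → ℝ) × (Fin n → ℝ) | convFeas A a b w.1 w.2} := by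
  set α : Fin n → ℝ := fun j => ∑ i, y i * A i j j with hα
  set β : Fin n → ℝ := fun j => ∑ i, y i * a i j with hβ
  have hαp : ∀ j, 0 < α j := by
    intro j
    have := hpd.diag_pos (i := j)
    simpa [Matrix.sum_apply, hα] using this
  set R : ℝ := ∑ i, y i * b i + ∑ j, β j ^ 2 / α j with hR
  set C : Fin n → ℝ := fun j => 2 * (R + 2 * β j ^ 2 / α j) / α j with hC
  have hbd : ∀ x z : Fin n → ℝ, convFeas A a b x z → ∀ j, z j ≤ C j := by
    intro x z h j
    -- Completing the square bounds every summand from below by `-β_k² / α_k`, so the bound on the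
    -- sum bounds each summand from above; half of `α_j z_j` then absorbs the linear term.
    have h1 : ∑ j, (α j * z j + 2 * β j * x j) ≤ ∑ i, y i * b i := by
      have h2 := weighted_constraint A a b y x z
      have h3 : ∑ i, y i * (∑ j, A i j j * z j + 2 * ∑ j, a i j * x j - b i) ≤ 0 :=
        Finset.sum_nonpos fun i _ => mul_nonpos_of_nonneg_of_nonpos (hy i) (by linarith [h.1 i])
      linarith
    have hsq : ∀ k, 0 ≤ α k * z k + 2 * β k * x k + β k ^ 2 / α k := by
      intro k
      have e : α k * x k ^ 2 + 2 * β k * x k + β k ^ 2 / α k = (α k * x k + β k) ^ 2 / α k := by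
        have := (hαp k).ne'
        field_simp
        ring
      have h5 : 0 ≤ (α k * x k + β k) ^ 2 / α k := div_nonneg (sq_nonneg _) (hαp k).le
      have := mul_le_mul_of_nonneg_left (h.2 k) (hαp k).le
      linarith
    have h6 : α j * z j + 2 * β j * x j + β j ^ 2 / α j ≤ R := by
      refine (Finset.single_le_sum (fun k _ => hsq k) (Finset.mem_univ j)).trans ?_
      rw [Finset.sum_add_distrib]
      linarith
    have h7 : 0 ≤ α j / 2 * x j ^ 2 + 2 * β j * x j + 2 * β j ^ 2 / α j := by
      have e : α j / 2 * x j ^ 2 + 2 * β j * x j + 2 * β j ^ 2 / α j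
          = (α j * x j + 2 * β j) ^ 2 / (2 * α j) := by
        have := (hαp j).ne'
        field_simp
        ring
      rw [e]
      exact div_nonneg (sq_nonneg _) (by linarith [hαp j])
    have h8 := mul_le_mul_of_nonneg_left (h.2 j) (hαp j).le
    have h9 : 0 ≤ β j ^ 2 / α j := div_nonneg (sq_nonneg _) (hαp j).le
    rw [hC, le_div_iff₀ (hαp j)]
    linarith
  refine (isCompact_Icc (a := ((fun j => -(C j + 1), fun _ => 0) : (Fin n → ℝ) × (Fin n → ℝ)))
    (b := ((fun j => C j + 1), C))).of_isClosed_subset ?_ ?_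
  · simp only [convFeas, Set.ofPred_and, Set.ofPred_forall]
    refine IsClosed.inter (isClosed_iInter fun i => ?_) (isClosed_iInter fun j => ?_)
    · exact isClosed_le (by fun_prop) (by fun_prop)
    · exact isClosed_le (by fun_prop) (by fun_prop)
  · rintro ⟨x, z⟩ h
    have hx : ∀ j, x j ^ 2 ≤ C j := fun j => (h.2 j).trans (hbd x z h j)
    refine ⟨⟨fun j => ?_, fun j => ?_⟩, ⟨fun j => ?_, fun j => hbd x z h j⟩⟩
    · have := hx j
      change -(C j + 1) ≤ x j
      nlinarith [sq_nonneg (x j + 1)]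
    · exact (sq_nonneg _).trans (h.2 j)
    · have := hx j
      change x j ≤ C j + 1
      nlinarith [sq_nonneg (x j - 1)]

/-! ### Tightness at the optimum -/

/-- Any separable `∑ (ν_j z_j + 2 γ_j x_j)` bounded below on `x_j² ≤ z_j` has `ν ≥ 0`, and
`γ_k = 0` wherever `ν_k = 0`. -/
theorem bounded_below_coeffs {ν γ : Fin n → ℝ} {q : ℝ}
    (h : ∀ w ∈ sqEpi n, q ≤ ∑ j, (ν j * w.2 j + 2 * γ j * w.1 j)) (k : Fin n) :
    0 ≤ ν k ∧ (ν k = 0 → γ k = 0) := by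
  -- Only the `k`-th coordinate is used.
  have hk : ∀ s t : ℝ, s ^ 2 ≤ t → q ≤ ν k * t + 2 * γ k * s := by
    intro s t hst
    have := h (Pi.single k s, Pi.single k t) (fun j => by
      by_cases hj : j = k
      · subst hj; simpa using hst
      · simp [hj])
    rw [Finset.sum_eq_single k (fun j _ hj => by simp [hj]) (by simp)] at this
    simpa using this
  constructor
  · by_contra! hν
    have := hk 0 ((|q| + 1) / (-ν k)) (by
      have : 0 < -ν k := by linarith
      have : 0 ≤ (|q| + 1) / (-ν k) := by positivity
      simpa using this)
    have e : ν k * ((|q| + 1) / (-ν k)) = -(|q| + 1) := by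
      have := hν.ne
      rw [div_neg, mul_neg, mul_div_cancel₀ _ this]
    rw [e] at this
    linarith [neg_abs_le q]
  · intro hν
    by_contra hγ
    have := hk (-(|q| + 1) / (2 * γ k)) _ le_rfl
    have e : 2 * γ k * (-(|q| + 1) / (2 * γ k)) = -(|q| + 1) := by field_simp
    rw [hν, e] at this
    linarith [neg_abs_le q]

/-- If all `S_k` are empty, every optimal solution of (C) satisfies `z_j = x_j²`:
with Slater multipliers the coefficients of `z` in the Lagrangian are all positive, so slack in
`x_j² ≤ z_j` could be removed to lower the Lagrangian below its minimum. -/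
theorem optimal_tight {D : Matrix (Fin n) (Fin n) ℝ} {A : Fin m → Matrix (Fin n) (Fin n) ℝ}
    {c : Fin n → ℝ} {a : Fin m → Fin n → ℝ} {b : Fin m → ℝ}
    (hslater : ∃ w ∈ sqEpi n, ∀ i, ∑ j, A i j j * w.2 j + 2 * ∑ j, a i j * w.1 j < b i)
    (hempty : ∀ k : Fin n, Sk D A c a k = ∅) {x z : Fin n → ℝ} (hxz : convFeas A a b x z)
    (hopt : ∀ x' z', convFeas A a b x' z' → convObj D c x z ≤ convObj D c x' z') (j : Fin n) :
    z j = x j ^ 2 := by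
  obtain ⟨μ, hμ, hL⟩ := exists_multiplier (K := sqEpi n)
    (f := fun w => ∑ j, D j j * w.2 j + 2 * ∑ j, c j * w.1 j - 0)
    (g := fun i w => ∑ j, A i j j * w.2 j + 2 * ∑ j, a i j * w.1 j - b i)
    (p := convObj D c x z) (convexOn_affine _ _ _) (fun i => convexOn_affine _ _ _)
    (fun w hw hg => by
      have := hopt w.1 w.2 ⟨fun i => by linarith [hg i], hw⟩
      simpa [convObj] using this)
    (by
      obtain ⟨w, hw, h⟩ := hslater
      exact ⟨w, hw, fun i => by linarith [h i]⟩)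
  set ν : Fin n → ℝ := fun j => D j j + ∑ i, μ i * A i j j with hν
  set γ : Fin n → ℝ := fun j => c j + ∑ i, μ i * a i j with hγ
  have hLeq : ∀ u v : Fin n → ℝ, ∑ j, D j j * v j + 2 * ∑ j, c j * u j - 0 +
      ∑ i, μ i * (∑ j, A i j j * v j + 2 * ∑ j, a i j * u j - b i) =
      ∑ j, (ν j * v j + 2 * γ j * u j) - ∑ i, μ i * b i := by
    intro u v
    rw [weighted_constraint]
    have : ∑ j, (ν j * v j + 2 * γ j * u j) = ∑ j, D j j * v j + 2 * ∑ j, c j * u j +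
        ∑ j, ((∑ i, μ i * A i j j) * v j + 2 * (∑ i, μ i * a i j) * u j) := by
      rw [Finset.mul_sum, ← Finset.sum_add_distrib, ← Finset.sum_add_distrib]
      exact Finset.sum_congr rfl fun j _ => by simp only [hν, hγ]; ring
    rw [this]; ring
  have hcoef : ∀ k, 0 ≤ ν k ∧ (ν k = 0 → γ k = 0) :=
    bounded_below_coeffs (q := convObj D c x z + ∑ i, μ i * b i) fun w hw => by
      have h1 := hL w hw
      have h2 := hLeq w.1 w.2
      linarith
  have hνpos : ∀ k, 0 < ν k := by
    intro k
    refine (hcoef k).1.lt_of_ne' fun h => ?_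
    have hmem : μ ∈ Sk D A c a k := ⟨hμ, h, (hcoef k).2 h, fun j _ => (hcoef j).1⟩
    rw [hempty k] at hmem
    exact hmem
  -- Replacing `z` by `x²` lowers the Lagrangian by `∑ ν_j (z_j - x_j²)`, yet its value at the
  -- optimal pair is already at most the minimum.
  have h1 := hL (x, fun j => x j ^ 2) (fun j => le_rfl)
  have h2 := hLeq x (fun j => x j ^ 2)
  have h3 := hLeq x z
  have h4 : ∑ i, μ i * (∑ j, A i j j * z j + 2 * ∑ j, a i j * x j - b i) ≤ 0 :=
    Finset.sum_nonpos fun i _ => mul_nonpos_of_nonneg_of_nonpos (hμ i) (by linarith [hxz.1 i])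
  have h5 : ∑ j, ν j * (z j - x j ^ 2) ≤ 0 := by
    have : ∑ j, ν j * (z j - x j ^ 2) = ∑ j, (ν j * z j + 2 * γ j * x j)
        - ∑ j, (ν j * x j ^ 2 + 2 * γ j * x j) := by
      rw [← Finset.sum_sub_distrib]
      exact Finset.sum_congr rfl fun j _ => by ring
    have h6 : convObj D c x z = ∑ j, D j j * z j + 2 * ∑ j, c j * x j := rfl
    simp only at h1
    linarith
  have hnn : ∀ k, 0 ≤ ν k * (z k - x k ^ 2) := fun k =>
    mul_nonneg (hνpos k).le (by linarith [hxz.2 k])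
  have h7 := (Finset.single_le_sum (fun k _ => hnn k) (Finset.mem_univ j)).trans h5
  have h8 := (mul_eq_zero.1 (le_antisymm h7 (hnn j))).resolve_left (hνpos j).ne'
  linarith

end Diagonal

/-- under Assumption 1, if `S_k = ∅` for every `k ∈ N`, then the
convex relaxation (C) and the Shor relaxation (S) are exact: `p* = v* = c*`. -/
theorem statement6 {n m : ℕ} (hn : 0 < n) (hm : 0 < m)
    (D : Matrix (Fin n) (Fin n) ℝ) (hD : D.IsDiag)
    (A : Fin m → Matrix (Fin n) (Fin n) ℝ) (hA : ∀ i, (A i).IsDiag)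
    (c : Fin n → ℝ) (a : Fin m → Fin n → ℝ) (b : Fin m → ℝ)
    (hass : Assumption1 A a b)
    (hempty : ∀ k : Fin n, Sk D A c a k = ∅) :
    convVal D A c a b = shorVal D A c a b ∧
      shorVal D A c a b = qVal D A c a b := by
  obtain ⟨⟨x₀, hx₀⟩, ⟨y, hy, hpd⟩, ⟨X₁, x₁, -, hX₁, hX₁pd⟩⟩ := hass
  have hpv : convVal D A c a b ≤ shorVal D A c a b := by
    refine le_sInf ?_
    rintro _ ⟨X, x, ⟨-, hX, hpsd⟩, rfl⟩
    refine sInf_le ⟨x, fun j => X j j, ⟨fun i => ?_, fun j => ?_⟩, ?_⟩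
    · have := hX i
      rwa [diag_trace (hA i)] at this
    · have := hpsd.diag_nonneg (i := j)
      simp only [Matrix.sub_apply, Matrix.vecMulVec_apply] at this
      linarith [sq (x j)]
    · simp only [shorObj, convObj, diag_trace hD]
  have hvc : shorVal D A c a b ≤ qVal D A c a b := by
    refine le_sInf ?_
    rintro _ ⟨x, hx, rfl⟩
    refine sInf_le ⟨vecMulVec x x, x, ⟨?_, fun i => ?_, ?_⟩, ?_⟩
    · ext j k
      simp [Matrix.vecMulVec_apply, mul_comm]
    · have := hx i
      rw [diag_quad (hA i)] at this
      rw [diag_trace (hA i)]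
      simpa only [Matrix.vecMulVec_apply, ← sq] using this
    · rw [sub_self]
      exact Matrix.PosSemidef.zero
    · simp only [shorObj, qObj, diag_trace hD, diag_quad hD, Matrix.vecMulVec_apply, ← sq]
  have hcp : qVal D A c a b ≤ convVal D A c a b := by
    have hne : {w : (Fin n → ℝ) × (Fin n → ℝ) | convFeas A a b w.1 w.2}.Nonempty := by
      refine ⟨(x₀, fun j => x₀ j ^ 2), fun i => ?_, fun j => le_rfl⟩
      have := hx₀ i
      rwa [diag_quad (hA i)] at this
    obtain ⟨⟨x, z⟩, hxz, hmin⟩ := (isCompact_convFeas A a b hy hpd).exists_isMinOn hne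
      (f := fun w => convObj D c w.1 w.2) (by unfold convObj; fun_prop)
    have hopt : ∀ x' z', convFeas A a b x' z' → convObj D c x z ≤ convObj D c x' z' :=
      fun x' z' h => hmin (show (x', z') ∈ {w : (Fin n → ℝ) × (Fin n → ℝ) |
        convFeas A a b w.1 w.2} from h)
    have hslater : ∃ w ∈ sqEpi n, ∀ i,
        ∑ j, A i j j * w.2 j + 2 * ∑ j, a i j * w.1 j < b i := by
      refine ⟨(x₁, fun j => X₁ j j), fun j => ?_, fun i => ?_⟩
      · have := hX₁pd.diag_pos (i := j)
        simp only [Matrix.sub_apply, Matrix.vecMulVec_apply] at this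
        simp only
        linarith [sq (x₁ j)]
      · have := hX₁ i
        rwa [diag_trace (hA i)] at this
    have htight : z = fun j => x j ^ 2 := funext (optimal_tight hslater hempty hxz hopt)
    subst htight
    refine le_sInf ?_
    rintro _ ⟨x', z', h', rfl⟩
    refine le_trans (sInf_le ⟨x, fun i => ?_, rfl⟩) (EReal.coe_le_coe_iff.2 ?_)
    · rw [diag_quad (hA i)]
      exact hxz.1 i
    · refine le_trans (le_of_eq ?_) (hopt x' z' h')
      simp only [qObj, convObj, diag_quad hD]
  exact ⟨le_antisymm hpv (hvc.trans hcp), le_antisymm hvc (hcp.trans hpv)⟩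

end DiagQCQP2011
end

section
/- Let {N_h}_{h∈H} be a partition of N such that for every h ∈ H and i ∈ M the diagonal entries A^i_{jj} take a common value ξ^{ih} for all j ∈ N_h, and for each h let d_h* = min_{j∈N_h} D_{jj} be attained at a unique index j_h. If (x, z, μ, ν) is a KKT point of the convex relaxation (C), then for every h ∈ H and every j ∈ N_h it holds that ν_j − ν_{j_h} = D_{jj} − d_h*; in particular ν_j > 0 for every j ∈ N_h \ {j_h}. -/
/- Common definitions for diagonal QCQPs, the Shor relaxation, and the
convex relaxations, following "Exactness conditions for the Shor relaxation
of diagonal QCQPs". Optimal values are infima in the extended reals. -/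

namespace DiagQCQP2011

open Matrix Finset

/-- under the partition hypothesis, at any KKT point of (C) one has
`ν_j - ν_{j_h} = D_{jj} - d_h*` for all `j ∈ N_h`, and in particular `ν_j > 0`
for all `j ∈ N_h \ {j_h}`. -/
theorem statement7 {n m : ℕ} {H : Type*} [Fintype H] (hn : 0 < n) (hm : 0 < m)
    (D : Matrix (Fin n) (Fin n) ℝ) (hD : D.IsDiag)
    (A : Fin m → Matrix (Fin n) (Fin n) ℝ) (hA : ∀ i, (A i).IsDiag)
    (c : Fin n → ℝ) (a : Fin m → Fin n → ℝ) (b : Fin m → ℝ)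
    (Nh : H → Finset (Fin n)) (ξ : Fin m → H → ℝ) (jh : H → Fin n)
    (hpart : PartitionHyp D A Nh ξ jh)
    (x z : Fin n → ℝ) (μ : Fin m → ℝ) (ν : Fin n → ℝ)
    (hkkt : KKT D A c a b x z μ ν) :
    ∀ h : H, ∀ j ∈ Nh h,
      ν j - ν (jh h) = D j j - D (jh h) (jh h) ∧ (j ≠ jh h → 0 < ν j) := by
  obtain ⟨-, hA_const, hmin_mem, hmin⟩ := hpart
  obtain ⟨-, hν, hstat, -⟩ := hkkt
  intro h j hj
  -- The constraint diagonals are constant on the class, so the multiplier terms in the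
  -- stationarity conditions at `j` and `jh h` coincide and cancel on subtraction.
  have hsum : ∑ i, μ i * A i j j = ∑ i, μ i * A i (jh h) (jh h) :=
    Finset.sum_congr rfl fun i _ => by
      rw [hA_const i h j hj, hA_const i h (jh h) (hmin_mem h)]
  have hdiff : ν j - ν (jh h) = D j j - D (jh h) (jh h) := by
    linarith [hstat j, hstat (jh h)]
  refine ⟨hdiff, fun hne => ?_⟩
  linarith [hν (jh h), hmin h j hj hne]

end DiagQCQP2011
end

section
/- Under Assumption 1 and the partition hypothesis, the optimal values of the convex relaxation (C) and of the second convex relaxation (C') are equal: q* = p*. -/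
/-! The feasible points of the two relaxations can be converted into one another without
increasing the objective, so the infima agree, whether or not they are attained.

From `(x, z)` feasible for (C), the class sums `w h = ∑ j ∈ N_h, z j` are feasible for (C'), and
the objective does not increase because `(D j j - d_h) (z j - x j ^ 2) ≥ 0`.
Conversely, from `(x, w)` feasible for (C'), put `z j = x j ^ 2` except that the whole slack
`w h - ∑ j ∈ N_h, x j ^ 2` is added at `j = j_h`. This leaves every constraint and, since
`D j j = d_h` at `j_h`, also the objective unchanged. Both directions regroup sums over `N` by
classes with `sum_classes`. -/

/- Common definitions for diagonal QCQPs, the Shor relaxation, and the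
convex relaxations, following "Exactness conditions for the Shor relaxation
of diagonal QCQPs". Optimal values are infima in the extended reals. -/

namespace DiagQCQP2011

open Matrix Finset

/-- A sum over all indices, regrouped along a family of finsets that partitions them. -/
theorem sum_classes {n : ℕ} {H : Type*} [Fintype H] {Nh : H → Finset (Fin n)}
    (hN : ∀ j : Fin n, ∃! h : H, j ∈ Nh h) (f : Fin n → ℝ) :
    ∑ j, f j = ∑ h, ∑ j ∈ Nh h, f j := by
  classical
  have h1 : ∀ h, ∑ j ∈ Nh h, f j = ∑ j, if j ∈ Nh h then f j else 0 := by
    intro h; simp [Finset.sum_ite_mem]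
  simp_rw [h1]
  rw [Finset.sum_comm]
  refine Finset.sum_congr rfl fun j _ => ?_
  obtain ⟨h, hh, hu⟩ := hN j
  rw [Finset.sum_eq_single h]
  · rw [if_pos hh]
  · intro k _ hk
    exact if_neg fun hj => hk (hu k hj)
  · intro hk; exact absurd (Finset.mem_univ h) hk

/-- The constraint sums of (C) see `z` only through its class sums. -/
theorem constraint_classes {n m : ℕ} {H : Type*} [Fintype H]
    {D : Matrix (Fin n) (Fin n) ℝ} {A : Fin m → Matrix (Fin n) (Fin n) ℝ}
    {Nh : H → Finset (Fin n)} {ξ : Fin m → H → ℝ} {jh : H → Fin n}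
    (hpart : PartitionHyp D A Nh ξ jh) {z : Fin n → ℝ} {w : H → ℝ}
    (hw : ∀ h, ∑ j ∈ Nh h, z j = w h) (i : Fin m) :
    ∑ j, A i j j * z j = ∑ h, ξ i h * w h := by
  rw [sum_classes hpart.1]
  refine Finset.sum_congr rfl fun h _ => ?_
  rw [← hw h, Finset.mul_sum]
  exact Finset.sum_congr rfl fun j hj => by rw [hpart.2.1 i h j hj]

/-- When `w` collects the class sums of `z`, the objectives of (C) and (C') differ by the gap
`∑ (D j j - d_h) (z j - x j ^ 2)`. -/
theorem convObj_eq {n m : ℕ} {H : Type*} [Fintype H]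
    {D : Matrix (Fin n) (Fin n) ℝ} {A : Fin m → Matrix (Fin n) (Fin n) ℝ}
    {Nh : H → Finset (Fin n)} {ξ : Fin m → H → ℝ} {jh : H → Fin n}
    (hpart : PartitionHyp D A Nh ξ jh) (c x : Fin n → ℝ) {z : Fin n → ℝ} {w : H → ℝ}
    (hw : ∀ h, ∑ j ∈ Nh h, z j = w h) :
    convObj D c x z = conv2Obj D c Nh jh x w +
      ∑ h, ∑ j ∈ Nh h, (D j j - D (jh h) (jh h)) * (z j - x j ^ 2) := by
  have key : ∑ j, D j j * z j = (∑ h, D (jh h) (jh h) * w h) +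
      (∑ h, ∑ j ∈ Nh h, (D j j - D (jh h) (jh h)) * x j ^ 2) +
      ∑ h, ∑ j ∈ Nh h, (D j j - D (jh h) (jh h)) * (z j - x j ^ 2) := by
    rw [sum_classes hpart.1, ← Finset.sum_add_distrib, ← Finset.sum_add_distrib]
    refine Finset.sum_congr rfl fun h _ => ?_
    rw [← hw h, Finset.mul_sum, ← Finset.sum_add_distrib, ← Finset.sum_add_distrib]
    exact Finset.sum_congr rfl fun j _ => by ring
  unfold convObj conv2Obj
  linarith

/-- under Assumption 1 and the partition hypothesis, the optimal
values of the convex relaxation (C) and of the second convex relaxation (C')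
coincide: `q* = p*`. -/
theorem statement11 {n m : ℕ} {H : Type*} [Fintype H] (hn : 0 < n) (hm : 0 < m)
    (D : Matrix (Fin n) (Fin n) ℝ) (hD : D.IsDiag)
    (A : Fin m → Matrix (Fin n) (Fin n) ℝ) (hA : ∀ i, (A i).IsDiag)
    (c : Fin n → ℝ) (a : Fin m → Fin n → ℝ) (b : Fin m → ℝ)
    (Nh : H → Finset (Fin n)) (ξ : Fin m → H → ℝ) (jh : H → Fin n)
    (hpart : PartitionHyp D A Nh ξ jh)
    (hass : Assumption1 A a b) :
    conv2Val D ξ c a b Nh jh = convVal D A c a b := by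
  classical
  have hN := hpart.1
  have hjh := hpart.2.2.1
  apply le_antisymm
  · refine le_sInf ?_
    rintro _ ⟨x, z, ⟨hc, hz⟩, rfl⟩
    set w : H → ℝ := fun h => ∑ j ∈ Nh h, z j with hwdef
    have hw : ∀ h, ∑ j ∈ Nh h, z j = w h := fun h => rfl
    have hle : conv2Obj D c Nh jh x w ≤ convObj D c x z := by
      rw [convObj_eq hpart c x hw]
      refine le_add_of_nonneg_right (Finset.sum_nonneg fun h _ => Finset.sum_nonneg fun j hj => ?_)
      refine mul_nonneg (sub_nonneg.2 ?_) (sub_nonneg.2 (hz j))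
      by_cases hjj : j = jh h
      · rw [hjj]
      · exact (hpart.2.2.2 h j hj hjj).le
    refine le_trans (sInf_le ⟨x, w, ⟨fun i => ?_, fun h => ?_⟩, rfl⟩) (EReal.coe_le_coe_iff.2 hle)
    · rw [← constraint_classes hpart hw i]
      exact hc i
    · exact Finset.sum_le_sum fun j _ => hz j
  · refine le_sInf ?_
    rintro _ ⟨x, w, ⟨hc, hx⟩, rfl⟩
    choose g hg hgu using hN
    have hgeq : ∀ h, ∀ j ∈ Nh h, g j = h := fun h j hj => (hgu j h hj).symm
    -- `g j` is the class of `j`; the slack of each class is placed at its index `j_h`.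
    let s : H → ℝ := fun h => w h - ∑ j ∈ Nh h, x j ^ 2
    let z : Fin n → ℝ := fun j => x j ^ 2 + if j = jh (g j) then s (g j) else 0
    have hzc : ∀ h, ∀ j ∈ Nh h, z j = x j ^ 2 + if j = jh h then s h else 0 := by
      intro h j hj
      simp only [z, hgeq h j hj]
    have hw : ∀ h, ∑ j ∈ Nh h, z j = w h := by
      intro h
      rw [Finset.sum_congr rfl (hzc h), Finset.sum_add_distrib, Finset.sum_ite_eq',
        if_pos (hjh h)]
      simp only [s]
      ring
    have hobj : convObj D c x z = conv2Obj D c Nh jh x w := by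
      rw [convObj_eq hpart c x hw, add_eq_left]
      refine Finset.sum_eq_zero fun h _ => Finset.sum_eq_zero fun j hj => ?_
      rw [hzc h j hj]
      by_cases hjj : j = jh h
      · rw [hjj]; ring
      · rw [if_neg hjj]; ring
    refine sInf_le ⟨x, z, ⟨fun i => ?_, fun j => ?_⟩, by rw [hobj]⟩
    · rw [constraint_classes hpart hw i]
      exact hc i
    · refine le_add_of_nonneg_right ?_
      split_ifs
      · exact sub_nonneg.2 (hx (g j))
      · exact le_rfl


end DiagQCQP2011
end

section
/- Under the partition hypothesis, let (x, z, μ, ν) be a KKT point of the convex relaxation (C). Define w_h = Σ_{j∈N_h} z_j and γ_h = ν_{j_h} for each h ∈ H. Then (x, w, μ, γ) is a KKT point of the second convex relaxation (C'), and the objective value of (C') at (x, w) equals the objective value of (C) at (x, z). -/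
/-!
Within a class `N_h` the stationarity condition of (C) in `z` gives
`ν_j - ν_{j_h} = D_{jj} - D_{j_h j_h}`, since the constraint matrices agree on the class. Hence
`ν_j > 0` for every `j ≠ j_h` in the class, so complementarity forces `z_j = x_j²` there
(`slack_eq_zero`). All the slack of the class therefore sits at `j_h`, where the multiplier is
`γ_h = ν_{j_h}`; this gives the complementarity condition of (C') and makes the objectives agree.
The other conditions follow by regrouping sums along the partition (`sum_partition`).
-/

/- Common definitions for diagonal QCQPs, the Shor relaxation, and the
convex relaxations, following "Exactness conditions for the Shor relaxation
of diagonal QCQPs". Optimal values are infima in the extended reals. -/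

namespace DiagQCQP2011

open Matrix Finset

/-- Regrouping a sum along a partition given by a family of finsets. -/
theorem sum_partition {n : ℕ} {H : Type*} [Fintype H] {Nh : H → Finset (Fin n)}
    (hP : ∀ j : Fin n, ∃! h : H, j ∈ Nh h) (f : Fin n → ℝ) :
    ∑ h, ∑ j ∈ Nh h, f j = ∑ j, f j := by
  classical
  have hdisj : Set.PairwiseDisjoint (↑(univ : Finset H)) Nh := by
    intro h _ h' _ hne
    refine Finset.disjoint_left.2 fun j hj hj' => hne ((hP j).unique hj hj')
  rw [← Finset.sum_biUnion hdisj]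
  congr 1
  ext j
  simpa using (hP j).exists

theorem nu_sub_nu {n m : ℕ} {H : Type*} {D : Matrix (Fin n) (Fin n) ℝ}
    {A : Fin m → Matrix (Fin n) (Fin n) ℝ} {c : Fin n → ℝ} {a : Fin m → Fin n → ℝ}
    {b : Fin m → ℝ} {Nh : H → Finset (Fin n)} {ξ : Fin m → H → ℝ} {jh : H → Fin n}
    (hpart : PartitionHyp D A Nh ξ jh) {x z : Fin n → ℝ} {μ : Fin m → ℝ} {ν : Fin n → ℝ}
    (hkkt : KKT D A c a b x z μ ν) {h : H} {j : Fin n} (hj : j ∈ Nh h) :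
    ν j - ν (jh h) = D j j - D (jh h) (jh h) := by
  obtain ⟨-, hξ, hjh, -⟩ := hpart
  obtain ⟨-, -, hz, -⟩ := hkkt
  have h1 := hz j
  have h2 := hz (jh h)
  simp only [hξ _ h j hj] at h1
  simp only [hξ _ h _ (hjh h)] at h2
  linarith

/-- Away from the minimizing index `j_h`, the constraint `x_j² ≤ z_j` is active, because its
multiplier exceeds `ν_{j_h} ≥ 0`. -/
theorem slack_eq_zero {n m : ℕ} {H : Type*} {D : Matrix (Fin n) (Fin n) ℝ}
    {A : Fin m → Matrix (Fin n) (Fin n) ℝ} {c : Fin n → ℝ} {a : Fin m → Fin n → ℝ}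
    {b : Fin m → ℝ} {Nh : H → Finset (Fin n)} {ξ : Fin m → H → ℝ} {jh : H → Fin n}
    (hpart : PartitionHyp D A Nh ξ jh) {x z : Fin n → ℝ} {μ : Fin m → ℝ} {ν : Fin n → ℝ}
    (hkkt : KKT D A c a b x z μ ν) {h : H} {j : Fin n} (hj : j ∈ Nh h) (hne : j ≠ jh h) :
    z j - x j ^ 2 = 0 := by
  have hsub := nu_sub_nu hpart hkkt hj
  obtain ⟨-, -, -, hmin⟩ := hpart
  obtain ⟨-, hν, -, -, -, -, hcompl⟩ := hkkt
  have hlt := hmin h j hj hne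
  have hpos : 0 < ν j := by linarith [hν (jh h)]
  exact (mul_eq_zero.1 (hcompl j)).resolve_left hpos.ne'

/-- under the partition hypothesis, a KKT point `(x, z, μ, ν)` of
(C) gives rise to the KKT point `(x, w, μ, γ)` of (C') with
`w_h = Σ_{j ∈ N_h} z_j` and `γ_h = ν_{j_h}`, with equal objective values. -/
theorem statement12 {n m : ℕ} {H : Type*} [Fintype H] (hn : 0 < n) (hm : 0 < m)
    (D : Matrix (Fin n) (Fin n) ℝ) (hD : D.IsDiag)
    (A : Fin m → Matrix (Fin n) (Fin n) ℝ) (hA : ∀ i, (A i).IsDiag)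
    (c : Fin n → ℝ) (a : Fin m → Fin n → ℝ) (b : Fin m → ℝ)
    (Nh : H → Finset (Fin n)) (ξ : Fin m → H → ℝ) (jh : H → Fin n)
    (hpart : PartitionHyp D A Nh ξ jh)
    (x z : Fin n → ℝ) (μ : Fin m → ℝ) (ν : Fin n → ℝ)
    (hkkt : KKT D A c a b x z μ ν)
    (w : H → ℝ) (hw : w = fun h => ∑ j ∈ Nh h, z j)
    (γ : H → ℝ) (hγ : γ = fun h => ν (jh h)) :
    KKT2 D ξ c a b Nh jh x w μ γ ∧
      conv2Obj D c Nh jh x w = convObj D c x z := by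
  have hsub := fun h j (hj : j ∈ Nh h) => nu_sub_nu hpart hkkt hj
  have hslack := fun h j (hj : j ∈ Nh h) => slack_eq_zero hpart hkkt hj
  obtain ⟨hP, hξ, hjh, -⟩ := hpart
  obtain ⟨hμ, hν, hz, hx, ⟨hlin, hsq⟩, hcμ, hcν⟩ := hkkt
  subst hw hγ
  have hA' : ∀ i, ∑ h, ξ i h * ∑ j ∈ Nh h, z j = ∑ j, A i j j * z j := by
    intro i
    rw [← sum_partition hP]
    refine Finset.sum_congr rfl fun h _ => ?_
    rw [Finset.mul_sum]
    exact Finset.sum_congr rfl fun j hj => by rw [hξ i h j hj]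
  refine ⟨⟨hμ, fun h => hν _, fun h => ?_, fun h j hj => ?_, ⟨fun i => ?_, fun h => ?_⟩,
    fun i => ?_, fun h => ?_⟩, ?_⟩
  · have := hz (jh h)
    simpa only [hξ _ h _ (hjh h)] using this
  · linear_combination hx j - x j * hsub h j hj
  · simpa only [hA'] using hlin i
  · exact Finset.sum_le_sum fun j _ => hsq j
  · simpa only [hA'] using hcμ i
  · rw [← Finset.sum_sub_distrib, Finset.mul_sum]
    refine Finset.sum_eq_zero fun j hj => ?_
    by_cases hne : j = jh h
    · rw [hne]
      exact hcν _
    · rw [hslack h j hj hne, mul_zero]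
  · unfold conv2Obj convObj
    rw [← sum_partition hP fun j => D j j * z j, ← Finset.sum_add_distrib]
    congr 1
    refine Finset.sum_congr rfl fun h _ => ?_
    rw [Finset.mul_sum, ← Finset.sum_add_distrib]
    refine Finset.sum_congr rfl fun j hj => ?_
    by_cases hne : j = jh h
    · rw [hne]
      ring
    · linear_combination (D (jh h) (jh h) - D j j) * hslack h j hj hne

end DiagQCQP2011
end
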